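/- Let l and r be positive integers and let g : A_l → A_r be an isomorphism of ℚ-algebras which maps the ℚ-linear span of the residue classes of a and x in A_l into the ℚ-linear span of the residue classes of a and x in A_r. Then l = r. -/

import Mathlib

open MvPolynomial

/-- The ideal `(a⁶, a²x, l²a⁴ + (6l−2)ax³ + lx⁴)` in `ℚ[a,x]`, where `a = X 0` and
`x = X 1`. -/
noncomputable def blowUpIdeal (l : ℕ) : Ideal (MvPolynomial (Fin 2) ℚ) :=
  Ideal.span
    { X 0 ^ 6, X 0 ^ 2 * X 1,
      C ((l : ℚ) ^ 2) * X 0 ^ 4 + C (6 * (l : ℚ) - 2) * X 0 * X 1 ^ 3 + C (l : ℚ) * X 1 ^ 4 }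

/-- `A_l = ℚ[a,x] / (a⁶, a²x, l²a⁴ + (6l−2)ax³ + lx⁴)`, the cohomology algebra of the
blow-up of `ℂP(5)` along the symplectic embedding `f_l : ℂP(1) → ℂP(5)`. -/
noncomputable abbrev BlowUpAlg (l : ℕ) : Type :=
  MvPolynomial (Fin 2) ℚ ⧸ blowUpIdeal l

/-- The residue class of `a` in `A_l`. -/
noncomputable def aBar (l : ℕ) : BlowUpAlg l := Ideal.Quotient.mk (blowUpIdeal l) (X 0)

/-- The residue class of `x` in `A_l`. -/
noncomputable def xBar (l : ℕ) : BlowUpAlg l := Ideal.Quotient.mk (blowUpIdeal l) (X 1)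

/-!
A surjection `A_l → A_r` lifts to a polynomial self-map `p` of the plane, which fixes the origin
because the origin is the only common zero of the relations of `A_l`. Taking lowest-degree parts,
the linear part of `p` is invertible and carries every homogeneous relation of `A_l` to a relation
of `A_r` of the same degree. In degree three, `a²x` has to go to a multiple of itself, so the
linear part is diagonal, say `a ↦ αa`, `x ↦ δx`. In degree four the quartic relations have to be
proportional modulo `a²x`, and eliminating `α`, `δ` and the factor of proportionality leaves
`l⁵(3r − 1)⁴ = r⁵(3l − 1)⁴`. As `l` is coprime to `3l − 1`, this makes `l` and `r` divide each
other.
-/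

section LinearPart

variable {σ τ R : Type*} [CommSemiring R]

lemma mem_idealOfVars_iff_constantCoeff_eq_zero {f : MvPolynomial σ R} :
    f ∈ idealOfVars σ R ↔ constantCoeff f = 0 := by
  rw [← pow_one (idealOfVars σ R), mem_pow_idealOfVars_iff']
  simp [Finsupp.degree_eq_zero_iff, constantCoeff_eq]

lemma mem_pow_idealOfVars_of_isHomogeneous {n : ℕ} {f : MvPolynomial σ R}
    (hf : f.IsHomogeneous n) : f ∈ idealOfVars σ R ^ n :=
  (mem_pow_idealOfVars_iff' n f).2 fun _ hx => hf.coeff_eq_zero hx.ne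

lemma aeval_mem_pow_idealOfVars {p : τ → MvPolynomial σ R} (hp : ∀ i, p i ∈ idealOfVars σ R)
    {n : ℕ} {F : MvPolynomial τ R} (hF : F ∈ idealOfVars τ R ^ n) :
    aeval p F ∈ idealOfVars σ R ^ n := by
  have hmap : (idealOfVars τ R).map (aeval p) ≤ idealOfVars σ R := by
    rw [Ideal.map_span, Ideal.span_le]
    rintro _ ⟨_, ⟨i, rfl⟩, rfl⟩
    exact (aeval_X (R := R) p i).symm ▸ hp i
  have hmem := Ideal.mem_map_of_mem (aeval p) hF
  rw [Ideal.map_pow] at hmem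
  exact Ideal.pow_right_mono hmap n hmem

lemma homogeneousComponent_eq_zero_of_mem_pow_idealOfVars {m n : ℕ} (hmn : m < n)
    {f : MvPolynomial σ R} (hf : f ∈ idealOfVars σ R ^ n) : homogeneousComponent m f = 0 :=
  homogeneousComponent_eq_zero' m f fun x hx =>
    (hmn.trans_le ((mem_pow_idealOfVars_iff n f).1 hf x hx)).ne'

lemma homogeneousComponent_mul_eq_zero_of_isHomogeneous_right {m n : ℕ} (hmn : m < n)
    (f : MvPolynomial σ R) {g : MvPolynomial σ R} (hg : g.IsHomogeneous n) :
    homogeneousComponent m (f * g) = 0 :=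
  homogeneousComponent_eq_zero_of_mem_pow_idealOfVars hmn
    (Ideal.mul_mem_left _ f (mem_pow_idealOfVars_of_isHomogeneous hg))

attribute [local instance] MvPolynomial.gradedAlgebra in
lemma homogeneousComponent_mul_of_isHomogeneous_right (n : ℕ) {d : ℕ} (f : MvPolynomial σ R)
    {g : MvPolynomial σ R} (hg : g.IsHomogeneous d) :
    homogeneousComponent (n + d) (f * g) = homogeneousComponent n f * g := by
  rw [← decomposition.decompose'_apply, ← decomposition.decompose'_apply]
  exact DirectSum.coe_decompose_mul_add_of_right_mem (homogeneousSubmodule σ R) hg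

lemma homogeneousComponent_one_eq_sum [Fintype σ] (f : MvPolynomial σ R) :
    homogeneousComponent 1 f = ∑ i, C (coeff (Finsupp.single i 1) f) * X i := by
  classical
  have hspan := homogeneousComponent_mem 1 f
  rw [homogeneousSubmodule_one_eq_span_X, Submodule.mem_span_range_iff_exists_fun] at hspan
  obtain ⟨c, hc⟩ := hspan
  have hcoeff (i : σ) : coeff (Finsupp.single i 1) f = c i := by
    have := congrArg (coeff (Finsupp.single i 1)) hc
    simpa [coeff_homogeneousComponent, coeff_sum, coeff_X, Finsupp.single_left_inj] using this.symm
  simp only [← hc, hcoeff, smul_eq_C_mul]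

/-- The Jacobian matrix at the origin of the polynomial map with components `p i`: its `i`-th row
lists the coefficients of the linear part of `p i`. -/
noncomputable def jacobianAtZero (p : τ → MvPolynomial σ R) : Matrix τ σ R :=
  Matrix.of fun i j => coeff (Finsupp.single j 1) (p i)

lemma homogeneousComponent_one_eq_sum_jacobianAtZero [Fintype σ] (p : τ → MvPolynomial σ R)
    (i : τ) : homogeneousComponent 1 (p i) = ∑ j, C (jacobianAtZero p i j) * X j :=
  homogeneousComponent_one_eq_sum (p i)

lemma jacobianAtZero_X [DecidableEq σ] : jacobianAtZero (X : σ → MvPolynomial σ R) = 1 := by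
  ext i j
  simp [jacobianAtZero, coeff_X, Matrix.one_apply, Finsupp.single_left_inj]

end LinearPart

section LeadingForms

variable {σ τ R : Type*} [CommRing R]

lemma sub_homogeneousComponent_mem_pow_idealOfVars {n : ℕ} {f : MvPolynomial σ R}
    (hf : f ∈ idealOfVars σ R ^ n) :
    f - homogeneousComponent n f ∈ idealOfVars σ R ^ (n + 1) := by
  refine (mem_pow_idealOfVars_iff' _ _).2 fun x hx => ?_
  rcases (Nat.lt_succ_iff.1 hx).lt_or_eq with h | h
  · simp [coeff_homogeneousComponent, h.ne, (mem_pow_idealOfVars_iff' n f).1 hf x h]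
  · simp [coeff_homogeneousComponent, h]

lemma homogeneousComponent_mul_of_mem_pow_idealOfVars {m n : ℕ} {f g : MvPolynomial σ R}
    (hf : f ∈ idealOfVars σ R ^ m) (hg : g ∈ idealOfVars σ R ^ n) :
    homogeneousComponent (m + n) (f * g) =
      homogeneousComponent m f * homogeneousComponent n g := by
  have hfg : homogeneousComponent (m + n) ((f - homogeneousComponent m f) * g) = 0 := by
    refine homogeneousComponent_eq_zero_of_mem_pow_idealOfVars
      (show m + n < m + 1 + n by lia) ?_
    rw [pow_add]
    exact Ideal.mul_mem_mul (sub_homogeneousComponent_mem_pow_idealOfVars hf) hg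
  rw [sub_mul, map_sub, sub_eq_zero] at hfg
  rw [hfg, mul_comm, add_comm, homogeneousComponent_mul_of_isHomogeneous_right n g
    (homogeneousComponent_isHomogeneous m f), mul_comm]

lemma jacobianAtZero_eq_of_sub_mem {p q : τ → MvPolynomial σ R}
    (h : ∀ i, p i - q i ∈ idealOfVars σ R ^ 2) : jacobianAtZero p = jacobianAtZero q := by
  ext i j
  have := (mem_pow_idealOfVars_iff' _ _).1 (h i) (Finsupp.single j 1) (by simp)
  rwa [coeff_sub, sub_eq_zero] at this

section Substitution

variable {p : τ → MvPolynomial σ R}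

lemma homogeneousComponent_zero_aeval (hp : ∀ i, p i ∈ idealOfVars σ R) (F : MvPolynomial τ R) :
    homogeneousComponent 0 (aeval p F) =
      aeval (fun i => homogeneousComponent 1 (p i)) (homogeneousComponent 0 F) := by
  have hF : F - homogeneousComponent 0 F ∈ idealOfVars τ R ^ 1 :=
    sub_homogeneousComponent_mem_pow_idealOfVars (by simp)
  have := homogeneousComponent_eq_zero_of_mem_pow_idealOfVars Nat.zero_lt_one
    (aeval_mem_pow_idealOfVars hp hF)
  simpa [sub_eq_zero] using this

lemma homogeneousComponent_one_aeval (hp : ∀ i, p i ∈ idealOfVars σ R) (F : MvPolynomial τ R) :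
    homogeneousComponent 1 (aeval p F) =
      aeval (fun i => homogeneousComponent 1 (p i)) (homogeneousComponent 1 F) := by
  induction F using MvPolynomial.induction_on with
  | C a => simp [algebraMap_eq, homogeneousComponent_of_mem (isHomogeneous_C _ a)]
  | add F G hF hG => simp only [map_add, hF, hG]
  | mul_X F i _ =>
    have hpi : p i ∈ idealOfVars σ R ^ 1 := by simpa only [pow_one] using hp i
    rw [map_mul, aeval_X, ← zero_add 1,
      homogeneousComponent_mul_of_mem_pow_idealOfVars (m := 0) (by simp) hpi,
      homogeneousComponent_mul_of_isHomogeneous_right 0 F (isHomogeneous_X R i), map_mul, aeval_X,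
      homogeneousComponent_zero_aeval hp]

theorem homogeneousComponent_aeval_of_mem_pow_idealOfVars (hp : ∀ i, p i ∈ idealOfVars σ R)
    {n : ℕ} {F : MvPolynomial τ R} (hF : F ∈ idealOfVars τ R ^ n) :
    homogeneousComponent n (aeval p F) =
      aeval (fun i => homogeneousComponent 1 (p i)) (homogeneousComponent n F) := by
  induction n generalizing F with
  | zero => exact homogeneousComponent_zero_aeval hp F
  | succ n ih =>
    rw [pow_succ] at hF
    refine Submodule.smul_induction_on hF (fun G hG H hH => ?_) fun G H hG hH => ?_
    · have hH₁ : H ∈ idealOfVars τ R ^ 1 := by rwa [pow_one]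
      rw [smul_eq_mul, map_mul, homogeneousComponent_mul_of_mem_pow_idealOfVars
        (aeval_mem_pow_idealOfVars hp hG) (aeval_mem_pow_idealOfVars hp hH₁),
        homogeneousComponent_mul_of_mem_pow_idealOfVars hG hH₁, map_mul, ih hG,
        homogeneousComponent_one_aeval hp H]
    · simp only [map_add, hG, hH]

lemma homogeneousComponent_aeval_of_isHomogeneous (hp : ∀ i, p i ∈ idealOfVars σ R) {n : ℕ}
    {F : MvPolynomial τ R} (hF : F.IsHomogeneous n) :
    homogeneousComponent n (aeval p F) = aeval (fun i => homogeneousComponent 1 (p i)) F := by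
  rw [homogeneousComponent_aeval_of_mem_pow_idealOfVars hp
    (mem_pow_idealOfVars_of_isHomogeneous hF), homogeneousComponent_eq_self hF]

lemma jacobianAtZero_aeval [Fintype τ] {υ : Type*} (hp : ∀ i, p i ∈ idealOfVars σ R)
    (F : υ → MvPolynomial τ R) :
    jacobianAtZero (fun k => aeval p (F k)) = jacobianAtZero F * jacobianAtZero p := by
  ext k j
  have hcoeff (f : MvPolynomial σ R) :
      coeff (Finsupp.single j 1) (homogeneousComponent 1 f) = coeff (Finsupp.single j 1) f := by
    simp [coeff_homogeneousComponent]
  have := congrArg (coeff (Finsupp.single j 1)) (homogeneousComponent_one_aeval hp (F k))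
  simpa [homogeneousComponent_one_eq_sum (F k), hcoeff, algebraMap_eq, coeff_sum, coeff_C_mul,
    jacobianAtZero, Matrix.mul_apply] using this

end Substitution

theorem isUnit_det_jacobianAtZero_of_surjective [Fintype σ] [DecidableEq σ]
    {p : σ → MvPolynomial σ R} (hp : ∀ i, p i ∈ idealOfVars σ R)
    {J : Ideal (MvPolynomial σ R)} (hJ : J ≤ idealOfVars σ R ^ 2)
    (hsurj : Function.Surjective fun F : MvPolynomial σ R => Ideal.Quotient.mk J (aeval p F)) :
    IsUnit (jacobianAtZero p).det := by
  choose F hF using fun k => hsurj (Ideal.Quotient.mk J (X k))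
  refine Matrix.isUnit_det_of_left_inverse (B := jacobianAtZero F) ?_
  rw [← jacobianAtZero_aeval hp, ← jacobianAtZero_X]
  exact jacobianAtZero_eq_of_sub_mem fun k => hJ (Ideal.Quotient.eq.1 (hF k))

lemma exists_aeval_lift_quotient {I : Ideal (MvPolynomial σ R)} {J : Ideal (MvPolynomial τ R)}
    (g : (MvPolynomial σ R ⧸ I) →ₐ[R] MvPolynomial τ R ⧸ J) :
    ∃ p : σ → MvPolynomial τ R,
      ∀ F, Ideal.Quotient.mk J (aeval p F) = g (Ideal.Quotient.mk I F) := by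
  choose p hp using fun i => Ideal.Quotient.mk_surjective (g (Ideal.Quotient.mk I (X i)))
  have hcomp : (Ideal.Quotient.mkₐ R J).comp (aeval p) = g.comp (Ideal.Quotient.mkₐ R I) := by
    ext i
    simpa using hp i
  exact ⟨p, DFunLike.congr_fun hcomp⟩

end LeadingForms

section BinaryForms

variable {K : Type*} [CommRing K] [IsDomain K]

lemma off_diag_eq_zero_of_cubic_identity [CharZero K] {α β γ δ c : K}
    (hdet : α * δ - β * γ ≠ 0)
    (h : ∀ s t, (α * s + β * t) ^ 2 * (γ * s + δ * t) = c * (s ^ 2 * t)) :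
    β = 0 ∧ γ = 0 := by
  have hβδ : β ^ 2 * δ = 0 := by linear_combination h 0 1
  have hαγ : α ^ 2 * γ = 0 := by linear_combination h 1 0
  have hβ : β = 0 := by
    by_contra hβ
    have hδ : δ = 0 := by simpa [hβ] using hβδ
    have hγ : γ ≠ 0 := by rintro rfl; simp [hδ] at hdet
    have hα : α = 0 := by simpa [hγ] using hαγ
    subst hα hδ
    have hβγ : 2 * (β ^ 2 * γ) = 0 := by linear_combination h 1 1 + h 1 (-1)
    simp [hβ, hγ] at hβγ
  have hα : α ≠ 0 := by rintro rfl; simp [hβ] at hdet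
  exact ⟨hβ, by simpa [hα] using hαγ⟩

lemma coeffs_eq_zero_of_quartic_identity [CharZero K] {A B D d e : K}
    (h : ∀ s t, A * s ^ 4 + B * (s * t ^ 3) + D * t ^ 4 = (d * s + e * t) * (s ^ 2 * t)) :
    A = 0 ∧ B = 0 ∧ D = 0 := by
  have hA : A = 0 := by linear_combination h 1 0
  have hD : D = 0 := by linear_combination h 0 1
  have hB : 6 * B = 0 := by
    linear_combination 6 * h 1 1 - 2 * h 1 (-1) - h 2 1 + 12 * hA - 3 * hD
  exact ⟨hA, by simpa using hB, hD⟩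

lemma pow_five_mul_pow_four_eq {l r α δ c : K} (hl : 3 * l - 1 ≠ 0) (hα : α ≠ 0) (hδ : δ ≠ 0)
    (h₁ : l ^ 2 * α ^ 4 = c * r ^ 2) (h₂ : (3 * l - 1) * (α * δ ^ 3) = c * (3 * r - 1))
    (h₃ : l * δ ^ 4 = c * r) : l ^ 5 * (3 * r - 1) ^ 4 = r ^ 5 * (3 * l - 1) ^ 4 := by
  have hc : c ≠ 0 := by
    rintro rfl
    exact mul_ne_zero hl (mul_ne_zero hα (pow_ne_zero 3 hδ)) (h₂.trans (zero_mul _))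
  refine mul_left_cancel₀ (pow_ne_zero 4 hc) ?_
  calc c ^ 4 * (l ^ 5 * (3 * r - 1) ^ 4)
    _ = l ^ 5 * (c * (3 * r - 1)) ^ 4 := by ring
    _ = (3 * l - 1) ^ 4 * (l ^ 2 * α ^ 4) * (l * δ ^ 4) ^ 3 := by rw [← h₂]; ring
    _ = c ^ 4 * (r ^ 5 * (3 * l - 1) ^ 4) := by rw [h₁, h₃]; ring

end BinaryForms

lemma dvd_of_pow_five_mul_pow_four_eq {l r : ℤ}
    (h : l ^ 5 * (3 * r - 1) ^ 4 = r ^ 5 * (3 * l - 1) ^ 4) : l ∣ r := by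
  have hcop : IsCoprime l (3 * l - 1) := ⟨3, -1, by ring⟩
  have hdvd : l ^ 5 ∣ r ^ 5 := hcop.pow.dvd_of_dvd_mul_right ⟨_, h.symm⟩
  exact (Int.pow_dvd_pow_iff (by norm_num)).1 hdvd

lemma eq_of_pow_five_mul_pow_four_eq {l r : ℕ}
    (h : (l : ℤ) ^ 5 * (3 * r - 1) ^ 4 = r ^ 5 * (3 * l - 1) ^ 4) : l = r :=
  Nat.dvd_antisymm (Int.natCast_dvd_natCast.1 (dvd_of_pow_five_mul_pow_four_eq h))
    (Int.natCast_dvd_natCast.1 (dvd_of_pow_five_mul_pow_four_eq h.symm))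

/-- The degree-four generator `l²a⁴ + (6l−2)ax³ + lx⁴` of `blowUpIdeal l`. -/
noncomputable def blowUpQuartic (l : ℕ) : MvPolynomial (Fin 2) ℚ :=
  C ((l : ℚ) ^ 2) * X 0 ^ 4 + C (6 * (l : ℚ) - 2) * X 0 * X 1 ^ 3 + C (l : ℚ) * X 1 ^ 4

lemma blowUpQuartic_isHomogeneous (l : ℕ) : (blowUpQuartic l).IsHomogeneous 4 :=
  ((isHomogeneous_C_mul_X_pow _ 0 4).add
    ((isHomogeneous_C_mul_X _ 0).mul (isHomogeneous_X_pow 1 3))).add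
    (isHomogeneous_C_mul_X_pow _ 1 4)

lemma isHomogeneous_X_zero_sq_mul_X_one :
    (X 0 ^ 2 * X 1 : MvPolynomial (Fin 2) ℚ).IsHomogeneous 3 :=
  (isHomogeneous_X_pow 0 2).mul (isHomogeneous_X ℚ 1)

section BlowUpIdeal

variable {l r : ℕ}

lemma X_zero_pow_six_mem_blowUpIdeal : X 0 ^ 6 ∈ blowUpIdeal l :=
  Ideal.subset_span (.inl rfl)

lemma X_zero_sq_mul_X_one_mem_blowUpIdeal : X 0 ^ 2 * X 1 ∈ blowUpIdeal l :=
  Ideal.subset_span (.inr (.inl rfl))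

lemma blowUpQuartic_mem_blowUpIdeal : blowUpQuartic l ∈ blowUpIdeal l :=
  Ideal.subset_span (.inr (.inr rfl))

lemma mem_blowUpIdeal_iff {f : MvPolynomial (Fin 2) ℚ} :
    f ∈ blowUpIdeal l ↔
      ∃ P Q S, P * X 0 ^ 6 + Q * (X 0 ^ 2 * X 1) + S * blowUpQuartic l = f :=
  Submodule.mem_span_triple

lemma blowUpIdeal_le_pow_idealOfVars {n : ℕ} (hn : n ≤ 3) :
    blowUpIdeal l ≤ idealOfVars (Fin 2) ℚ ^ n := by
  have hmem {k : ℕ} {f : MvPolynomial (Fin 2) ℚ} (hf : f.IsHomogeneous k) (hk : 3 ≤ k) :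
      f ∈ idealOfVars (Fin 2) ℚ ^ n :=
    Ideal.pow_le_pow_right (hn.trans hk) (mem_pow_idealOfVars_of_isHomogeneous hf)
  refine Ideal.span_le.2 ?_
  rintro _ (rfl | rfl | rfl)
  · exact hmem (isHomogeneous_X_pow 0 6) (by norm_num)
  · exact hmem isHomogeneous_X_zero_sq_mul_X_one le_rfl
  · exact hmem (blowUpQuartic_isHomogeneous l) (by norm_num)

lemma exists_homogeneousComponent_three_eq {f : MvPolynomial (Fin 2) ℚ}
    (hf : f ∈ blowUpIdeal l) : ∃ c, homogeneousComponent 3 f = C c * (X 0 ^ 2 * X 1) := by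
  obtain ⟨P, Q, S, rfl⟩ := mem_blowUpIdeal_iff.1 hf
  have hP := homogeneousComponent_mul_eq_zero_of_isHomogeneous_right (show 3 < 6 by norm_num) P
    (isHomogeneous_X_pow 0 6)
  have hQ := homogeneousComponent_mul_of_isHomogeneous_right 0 Q isHomogeneous_X_zero_sq_mul_X_one
  have hS := homogeneousComponent_mul_eq_zero_of_isHomogeneous_right (show 3 < 4 by norm_num) S
    (blowUpQuartic_isHomogeneous l)
  rw [homogeneousComponent_zero] at hQ
  exact ⟨_, by rw [map_add, map_add, hP, hQ, hS, zero_add, add_zero]⟩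

lemma exists_homogeneousComponent_four_eq {f : MvPolynomial (Fin 2) ℚ}
    (hf : f ∈ blowUpIdeal l) : ∃ d e c, homogeneousComponent 4 f =
      (C d * X 0 + C e * X 1) * (X 0 ^ 2 * X 1) + C c * blowUpQuartic l := by
  obtain ⟨P, Q, S, rfl⟩ := mem_blowUpIdeal_iff.1 hf
  have hP := homogeneousComponent_mul_eq_zero_of_isHomogeneous_right (show 4 < 6 by norm_num) P
    (isHomogeneous_X_pow 0 6)
  have hQ := homogeneousComponent_mul_of_isHomogeneous_right 1 Q isHomogeneous_X_zero_sq_mul_X_one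
  have hS := homogeneousComponent_mul_of_isHomogeneous_right 0 S (blowUpQuartic_isHomogeneous l)
  rw [homogeneousComponent_one_eq_sum, Fin.sum_univ_two] at hQ
  rw [homogeneousComponent_zero] at hS
  exact ⟨_, _, _, by rw [map_add, map_add, hP, hQ, hS, zero_add]⟩

lemma mem_idealOfVars_of_forall_aeval_mem {τ : Type*} {p : Fin 2 → MvPolynomial τ ℚ} (hl : l ≠ 0)
    (hp : ∀ F ∈ blowUpIdeal l, aeval p F ∈ idealOfVars τ ℚ) (i : Fin 2) :
    p i ∈ idealOfVars τ ℚ := by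
  simp only [mem_idealOfVars_iff_constantCoeff_eq_zero] at hp ⊢
  have h₀ : constantCoeff (p 0) = 0 := by
    simpa using hp _ X_zero_pow_six_mem_blowUpIdeal
  have h₁ : constantCoeff (p 1) = 0 := by
    simpa [blowUpQuartic, h₀, hl, algebraMap_eq] using hp _ blowUpQuartic_mem_blowUpIdeal
  revert i
  exact Fin.forall_fin_two.2 ⟨h₀, h₁⟩

section DiagonalLinearPart

variable {p : Fin 2 → MvPolynomial (Fin 2) ℚ}

lemma jacobianAtZero_off_diag_eq_zero (hp : ∀ i, p i ∈ idealOfVars (Fin 2) ℚ)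
    (hdet : (jacobianAtZero p).det ≠ 0)
    (h : aeval (R := ℚ) p (X 0 ^ 2 * X 1) ∈ blowUpIdeal r) :
    jacobianAtZero p 0 1 = 0 ∧ jacobianAtZero p 1 0 = 0 := by
  obtain ⟨c, hc⟩ := exists_homogeneousComponent_three_eq h
  rw [homogeneousComponent_aeval_of_isHomogeneous hp isHomogeneous_X_zero_sq_mul_X_one] at hc
  rw [Matrix.det_fin_two] at hdet
  refine off_diag_eq_zero_of_cubic_identity hdet (c := c) fun s t => ?_
  simpa [homogeneousComponent_one_eq_sum_jacobianAtZero] using congrArg (eval ![s, t]) hc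

lemma exists_scalar_of_aeval_blowUpQuartic_mem (hp : ∀ i, p i ∈ idealOfVars (Fin 2) ℚ)
    (h₀₁ : jacobianAtZero p 0 1 = 0) (h₁₀ : jacobianAtZero p 1 0 = 0)
    (h : aeval p (blowUpQuartic l) ∈ blowUpIdeal r) :
    ∃ c : ℚ, (l : ℚ) ^ 2 * jacobianAtZero p 0 0 ^ 4 = c * r ^ 2 ∧
      (3 * (l : ℚ) - 1) * (jacobianAtZero p 0 0 * jacobianAtZero p 1 1 ^ 3) = c * (3 * r - 1) ∧
      (l : ℚ) * jacobianAtZero p 1 1 ^ 4 = c * r := by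
  obtain ⟨d, e, c, hc⟩ := exists_homogeneousComponent_four_eq h
  rw [homogeneousComponent_aeval_of_isHomogeneous hp (blowUpQuartic_isHomogeneous l)] at hc
  set α := jacobianAtZero p 0 0
  set δ := jacobianAtZero p 1 1
  have heval (s t : ℚ) : (l : ℚ) ^ 2 * (α * s) ^ 4 + (6 * l - 2) * (α * s) * (δ * t) ^ 3 +
      l * (δ * t) ^ 4 = (d * s + e * t) * (s ^ 2 * t) +
        c * (r ^ 2 * s ^ 4 + (6 * r - 2) * s * t ^ 3 + r * t ^ 4) := by
    simpa [homogeneousComponent_one_eq_sum_jacobianAtZero, h₀₁, h₁₀, blowUpQuartic] using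
      congrArg (eval ![s, t]) hc
  obtain ⟨h₁, h₂, h₃⟩ := coeffs_eq_zero_of_quartic_identity
    (A := (l : ℚ) ^ 2 * α ^ 4 - c * r ^ 2)
    (B := (6 * l - 2) * (α * δ ^ 3) - c * (6 * r - 2)) (D := l * δ ^ 4 - c * r)
    (d := d) (e := e) fun s t => by linear_combination heval s t
  exact ⟨c, sub_eq_zero.1 h₁, by linear_combination h₂ / 2, sub_eq_zero.1 h₃⟩

end DiagonalLinearPart

end BlowUpIdeal

theorem blowUpAlg_iso_imp_eq_general (l r : ℕ) (hl : 0 < l) (g : BlowUpAlg l →ₐ[ℚ] BlowUpAlg r)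
    (hg : Function.Surjective g) : l = r := by
  obtain ⟨p, hpg⟩ := exists_aeval_lift_quotient g
  have hmem {F} (hF : F ∈ blowUpIdeal l) : aeval p F ∈ blowUpIdeal r := by
    rw [← Ideal.Quotient.eq_zero_iff_mem, hpg, Ideal.Quotient.eq_zero_iff_mem.2 hF, map_zero]
  have hp : ∀ i, p i ∈ idealOfVars (Fin 2) ℚ := by
    refine mem_idealOfVars_of_forall_aeval_mem hl.ne' fun F hF => ?_
    simpa only [pow_one] using blowUpIdeal_le_pow_idealOfVars (n := 1) (by norm_num) (hmem hF)
  have hdet : (jacobianAtZero p).det ≠ 0 := by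
    refine (isUnit_det_jacobianAtZero_of_surjective hp
      (blowUpIdeal_le_pow_idealOfVars (l := r) (by norm_num)) ?_).ne_zero
    simpa only [hpg] using! hg.comp Ideal.Quotient.mk_surjective
  obtain ⟨h₀₁, h₁₀⟩ :=
    jacobianAtZero_off_diag_eq_zero hp hdet (hmem X_zero_sq_mul_X_one_mem_blowUpIdeal)
  obtain ⟨c, h₁, h₂, h₃⟩ :=
    exists_scalar_of_aeval_blowUpQuartic_mem hp h₀₁ h₁₀ (hmem blowUpQuartic_mem_blowUpIdeal)
  rw [Matrix.det_fin_two, h₀₁, zero_mul, sub_zero, mul_ne_zero_iff] at hdet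
  have hl₃ : 3 * (l : ℚ) - 1 ≠ 0 := by
    have : (1 : ℚ) ≤ l := by exact_mod_cast hl
    linarith
  refine eq_of_pow_five_mul_pow_four_eq ?_
  exact_mod_cast pow_five_mul_pow_four_eq hl₃ hdet.1 hdet.2 h₁ h₂ h₃

/-- If `l`, `r` are positive integers and `g : A_l → A_r` is an isomorphism of
`ℚ`-algebras mapping the span of the residue classes of `a` and `x` in `A_l` into the
span of the residue classes of `a` and `x` in `A_r` (i.e. `g` is an isomorphism of
graded algebras), then `l = r`. -/
theorem blowUpAlg_iso_imp_eq (l r : ℕ) (hl : 0 < l) (hr : 0 < r)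
    (g : BlowUpAlg l ≃ₐ[ℚ] BlowUpAlg r)
    (hg : ∀ y ∈ Submodule.span ℚ ({aBar l, xBar l} : Set (BlowUpAlg l)),
      g y ∈ Submodule.span ℚ ({aBar r, xBar r} : Set (BlowUpAlg r))) :
    l = r :=
  blowUpAlg_iso_imp_eq_general l r hl g.toAlgHom g.surjective
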